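/- Let $G$ be a finite group of order $n$, $d \mid n$, $\Gamma = \mathrm{Gal}(\mathbb{Q}(\zeta_n)/\mathbb{Q}(\zeta_d))$ acting on $\mathrm{Irr}(G)$ by composition and on $G$ by $\sigma.g = g^{r_\sigma}$ where $\sigma(\zeta_n) = \zeta_n^{r_\sigma}$. Then the number of $\Gamma$-orbits on $\mathrm{Irr}(G)$ equals the number of $\Gamma$-orbits on the set of conjugacy classes of $G$. -/

import Mathlib

section Helpers

open Module

lemma trace_aux {L V : Type*} [Field L] [CharZero L] [AddCommGroup V] [Module L V]
    [FiniteDimensional L V] {n : ℕ} (hn : 0 < n) {z : L} (hz : IsPrimitiveRoot z n)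
    (φ : V →ₗ[L] V) (hφ : φ ^ n = 1) :
    ∃ m : ℕ → ℕ, ∀ r : ℕ, LinearMap.trace L V (φ ^ r) =
      ∑ i ∈ Finset.range n, (m i : L) * (z ^ i) ^ r := by
  have hn0 : (n : L) ≠ 0 := by exact_mod_cast hn.ne'
  have hz0 : z ≠ 0 := hz.ne_zero hn.ne'
  let P : ℕ → (V →ₗ[L] V) := fun i => (n : L)⁻¹ • ∑ j ∈ Finset.range n, ((z ^ i)⁻¹) ^ j • φ ^ j
  have hroot : ∀ i, ((z ^ i)⁻¹) ^ n = 1 := by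
    intro i
    rw [inv_pow, ← pow_mul, mul_comm, pow_mul, hz.pow_eq_one, one_pow, inv_one]
  have hφP : ∀ i, φ * P i = z ^ i • P i := by
    intro i
    have h1 : ∀ j, φ * (((z ^ i)⁻¹) ^ j • φ ^ j) = z ^ i • (((z ^ i)⁻¹) ^ (j+1) • φ ^ (j+1)) := by
      intro j
      rw [mul_smul_comm, ← pow_succ', smul_smul]
      congr 1
      have : z ^ i ≠ 0 := pow_ne_zero _ hz0
      rw [pow_succ', ← mul_assoc, mul_inv_cancel₀ this, one_mul]
    have h2 := Finset.sum_range_succ' (fun j => ((z ^ i)⁻¹) ^ j • φ ^ j) n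
    rw [Finset.sum_range_succ, hroot, hφ, pow_zero, pow_zero, add_left_inj] at h2
    simp only [P]
    rw [mul_smul_comm, Finset.mul_sum, Finset.sum_congr rfl (fun j _ => h1 j), ← Finset.smul_sum,
      ← h2, smul_comm]
  have hφP' : ∀ i r, φ ^ r * P i = (z ^ i) ^ r • P i := by
    intro i r
    induction r with
    | zero => simp
    | succ r ih => rw [pow_succ, mul_assoc, hφP, mul_smul_comm, ih, smul_smul, pow_succ']
  have hPP : ∀ i, P i * P i = P i := by
    intro i
    conv_lhs => enter [1]; simp only [P]
    rw [smul_mul_assoc, Finset.sum_mul]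
    have : ∀ j ∈ Finset.range n, ((z ^ i)⁻¹ ^ j • φ ^ j) * P i = P i := by
      intro j _
      rw [smul_mul_assoc, hφP', smul_smul, ← mul_pow, inv_mul_cancel₀ (pow_ne_zero _ hz0), one_pow,
        one_smul]
    rw [Finset.sum_congr rfl this, Finset.sum_const, Finset.card_range, ← Nat.cast_smul_eq_nsmul L,
      smul_smul, inv_mul_cancel₀ hn0, one_smul]
  have hsum : ∑ i ∈ Finset.range n, P i = 1 := by
    simp only [P]
    rw [← Finset.smul_sum, Finset.sum_comm]
    have : ∀ j ∈ Finset.range n, ∑ i ∈ Finset.range n, ((z ^ i)⁻¹) ^ j • φ ^ j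
        = if j = 0 then (n : L) • (1 : V →ₗ[L] V) else 0 := by
      intro j hj
      rw [← Finset.sum_smul]
      split_ifs with h
      · subst h; simp
      · have h1 : ∀ i, ((z ^ i)⁻¹) ^ j = ((z⁻¹) ^ j) ^ i := by
          intro i; rw [← inv_pow, ← pow_mul, ← pow_mul, mul_comm]
        simp_rw [h1]
        have h2 : z⁻¹ ^ j ≠ 1 := by
          apply hz.inv.pow_ne_one_of_pos_of_lt h (Finset.mem_range.mp hj)
        rw [geom_sum_eq h2, ← pow_mul, mul_comm, pow_mul, hz.inv.pow_eq_one]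
        simp
    rw [Finset.sum_congr rfl this, Finset.sum_ite_eq', if_pos (Finset.mem_range.mpr hn), smul_smul,
      inv_mul_cancel₀ hn0, one_smul]
  refine ⟨fun i => finrank L (LinearMap.range (P i)), fun r => ?_⟩
  rw [← mul_one (φ ^ r), ← hsum, Finset.mul_sum, map_sum]
  refine Finset.sum_congr rfl fun i _ => ?_
  rw [hφP', map_smul, smul_eq_mul, mul_comm]
  congr 1
  exact ((LinearMap.isProj_range_iff_isIdempotentElem (P i)).2 (hPP i)).trace

lemma scalar_aux {K L V G : Type*} [Field K] [CharZero K] [Field L] [Algebra K L]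
    [AddCommGroup V] [Module K V] [Module L V] [IsScalarTower K L V] [FiniteDimensional K V]
    [Nontrivial V] [Fintype G]
    {n : ℕ} (hn : 0 < n) {z : K} (hz : IsPrimitiveRoot z n) (φ : G → V →ₗ[L] V)
    (hφ : ∀ g, φ g ^ n = 1) (f : G → K) (t : L)
    (ht : ∀ v, t • v = ∑ g, f g • φ g v) : ∃ c : K, algebraMap K L c = t := by
  have : CharZero L := charZero_of_injective_algebraMap (algebraMap K L).injective
  have : FiniteDimensional L V := FiniteDimensional.right K L V
  choose m hm using fun g => trace_aux hn (hz.map_of_injective (algebraMap K L).injective) (φ g) (hφ g)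
  have hT : t • (1 : V →ₗ[L] V) = ∑ g, algebraMap K L (f g) • φ g := by
    ext v
    simp [ht]
  have h2 := congrArg (LinearMap.trace L V) hT
  have hfr : (finrank L V : K) ≠ 0 := by
    exact_mod_cast (finrank_pos (R := L) (M := V)).ne'
  have hfr' : (finrank L V : L) ≠ 0 := by
    exact_mod_cast (finrank_pos (R := L) (M := V)).ne'
  rw [map_smul, LinearMap.trace_one, map_sum, smul_eq_mul] at h2
  refine ⟨(∑ g, f g * ∑ i ∈ Finset.range n, (m g i : K) * z ^ i) / finrank L V, ?_⟩
  rw [map_div₀, map_natCast, div_eq_iff hfr', h2, map_sum]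
  refine Finset.sum_congr rfl fun g _ => ?_
  have := hm g 1
  rw [pow_one] at this
  rw [map_smul, this]
  simp

open scoped MonoidAlgebra in
lemma central_aux {K G V : Type*} [Field K] [CharZero K] [Group G] [Fintype G] [AddCommGroup V]
    [Module K V] [FiniteDimensional K V]
    {z : K} (hz : IsPrimitiveRoot z (Fintype.card G)) (ρ : Representation K G V)
    (hρ : ρ.IsIrreducible) (f : G → K) (hf : ∀ g h, f (h * g * h⁻¹) = f g)
    (h0 : ∑ g, f g * ρ.character g = 0) : ∑ g, f g • ρ g = 0 := by
  classical
  have : IsSimpleModule K[G] ρ.asModule := (Representation.irreducible_iff_isSimpleModule_asModule ρ).mp hρ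
  let D := Module.End K[G] ρ.asModule
  let L := Subalgebra.center K D
  have : FiniteDimensional K D := by
    infer_instance
  have : IsDomain D := inferInstance
  let : Field L := fieldOfFiniteDimensional K L
  let a : K[G] := ∑ g, MonoidAlgebra.single g (f g)
  have ha : ∀ b : K[G], a * b = b * a := by
    intro b
    induction b using MonoidAlgebra.induction_linear with
    | zero => simp
    | add x y hx hy => rw [mul_add, add_mul, hx, hy]
    | single h k =>
      simp only [a, Finset.sum_mul, Finset.mul_sum, MonoidAlgebra.single_mul_single]
      refine Fintype.sum_equiv (MulAut.conj h⁻¹).toEquiv _ _ fun g => ?_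
      have : f (h⁻¹ * g * h) = f g := by simpa using hf g h⁻¹
      rw [mul_assoc] at this
      simp [this, mul_assoc, mul_comm]
  let T : D := 
    { toFun := fun v => a • v
      map_add' := by simp
      map_smul' := by intro r v; simp [smul_smul, ha] }
  have hT : T ∈ L := by
    rw [Subalgebra.mem_center_iff]
    intro b
    ext v
    exact b.map_smul a v
  let t : L := ⟨T, hT⟩
  have : IsScalarTower K L ρ.asModule := ⟨fun k l v => by
    rfl⟩
  let φ : G → ρ.asModule →ₗ[L] ρ.asModule := fun g =>
    { toFun := fun v => (MonoidAlgebra.of K G g) • v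
      map_add' := by simp
      map_smul' := by
        intro l v
        exact (l.1.map_smul (MonoidAlgebra.of K G g) v).symm }
  have hφpow : ∀ g k v, (φ g ^ k) v = MonoidAlgebra.of K G (g ^ k) • v := by
    intro g k
    induction k with
    | zero => intro v; simp [← MonoidAlgebra.one_def]
    | succ k ih =>
      intro v
      rw [pow_succ, Module.End.mul_apply, ih, pow_succ, map_mul, mul_smul]
      rfl
  have hφn : ∀ g, φ g ^ (Fintype.card G) = 1 := by
    intro g
    ext v
    rw [hφpow, pow_card_eq_one, map_one, one_smul]
    rfl
  have : Nontrivial ρ.asModule := IsSimpleModule.nontrivial K[G] ρ.asModule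
  obtain ⟨c, hc⟩ := scalar_aux (K := K) (L := L) (V := ρ.asModule) Fintype.card_pos hz φ hφn f t (by
    intro v
    change a • v = _
    simp only [a, Finset.sum_smul]
    refine Finset.sum_congr rfl fun g _ => ?_
    change _ = f g • (MonoidAlgebra.of K G g • v)
    rw [← smul_assoc]
    simp
    rfl)
  have hcv : ∀ v : ρ.asModule, c • v = a • v := by
    intro v
    have : (algebraMap K L c) • v = t • v := by rw [hc]
    exact this
  have key : ∑ g, f g • ρ g = c • (1 : V →ₗ[K] V) := by
    have h1 : ∑ g, f g • ρ g = ρ.asAlgebraHom a := by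
      simp only [a, map_sum, Representation.asAlgebraHom_single]
    rw [h1]
    ext v
    exact (hcv v).symm
  have htr := congrArg (LinearMap.trace K V) key
  rw [map_sum, map_smul, LinearMap.trace_one] at htr
  have h3 : ∑ g, (LinearMap.trace K V) (f g • ρ g) = 0 := by
    rw [← h0]
    exact Finset.sum_congr rfl fun g _ => by rw [map_smul]; rfl
  rw [h3] at htr
  have : Nontrivial V := this
  have hfr : (finrank K V : K) ≠ 0 := by
    exact_mod_cast (finrank_pos (R := K) (M := V)).ne'
  have hc0 : c = 0 := by
    rcases mul_eq_zero.mp htr.symm with h | h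
    · exact h
    · exact absurd h hfr
  rw [key, hc0, zero_smul]

open scoped MonoidAlgebra in
lemma eq_zero_aux {K G : Type} [Field K] [CharZero K] [Group G] [Fintype G]
    {z : K} (hz : IsPrimitiveRoot z (Fintype.card G))
    (f : G → K) (hf : ∀ g h, f (h * g * h⁻¹) = f g)
    (h0 : ∀ (V : Type) [AddCommGroup V] [Module K V] [FiniteDimensional K V]
      (ρ : Representation K G V), ρ.IsIrreducible → ∑ g, f g * ρ.character g = 0) : f = 0 := by
  classical
  let a : K[G] := ∑ g, MonoidAlgebra.single g (f g)
  have ha : ∀ (V : Type) [AddCommGroup V] [Module K V] [FiniteDimensional K V]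
      (ρ : Representation K G V), ρ.IsIrreducible → ρ.asAlgebraHom a = 0 := by
    intro V _ _ _ ρ hρ
    rw [← central_aux hz ρ hρ f hf (h0 V ρ hρ)]
    simp only [a, map_sum, Representation.asAlgebraHom_single]
  have hs : ∀ S : Submodule K[G] K[G], IsSimpleModule K[G] S → ∀ m ∈ S, a * m = 0 := by
    intro S hS m hm
    let ρ : Representation K G S :=
      (Algebra.lsmul K K S : K[G] →ₐ[K] Module.End K S).toMonoidHom.comp (MonoidAlgebra.of K G)
    have hρ : ρ.asAlgebraHom = Algebra.lsmul K K S := by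
      apply MonoidAlgebra.algHom_ext
      · intro g
        ext v
        simp [ρ]
      · exact Subsingleton.elim _ _
    let e : ρ.asModule ≃ₗ[K[G]] S :=
      { ρ.asModuleEquiv.toAddEquiv with
        map_smul' := by
          intro r v
          change ρ.asAlgebraHom r _ = _
          rw [hρ]
          rfl }
    have hirr : ρ.IsIrreducible := by
      rw [Representation.irreducible_iff_isSimpleModule_asModule]
      exact IsSimpleModule.congr e
    have h := LinearMap.congr_fun (ha _ _ hirr) ⟨m, hm⟩
    rw [hρ] at h
    exact congrArg Subtype.val h
  have ht : ∀ m : K[G], a * m = 0 := by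
    intro m
    have hm : m ∈ (⊤ : Submodule K[G] K[G]) := trivial
    have : NeZero (Nat.card G : K) := ⟨by simp⟩
    rw [← IsSemisimpleModule.sSup_simples_eq_top K[G] K[G], sSup_eq_iSup'] at hm
    induction hm using Submodule.iSup_induction' with
    | mem i x hx => exact hs _ i.2 x hx
    | zero => simp
    | add x y _ _ hx hy => rw [mul_add, hx, hy, add_zero]
  have h1 := ht 1
  rw [mul_one] at h1
  funext g
  have h2 := congrArg (fun b : K[G] => b.coeff g) h1
  simpa [a, Finsupp.single_apply] using h2

/-- Characters of irreducible representations. -/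
def IrrChar (K G : Type) [Field K] [Group G] : Set (G → K) :=
  {f | ∃ (V : Type) (_ : AddCommGroup V) (_ : Module K V) (_ : FiniteDimensional K V)
    (ρ : Representation K G V), ρ.IsIrreducible ∧ f = ρ.character}

open CategoryTheory in
lemma simple_iff_aux {K G : Type} [Field K] [Group G] (V : FDRep K G) :
    Simple V ↔ Representation.IsIrreducible (V.ρ : Representation K G V) := by
  let F := forget₂ (FDRep K G) (Rep K G)
  constructor
  · intro hV
    have hnt : Nontrivial V := by
      by_contra h
      rw [not_nontrivial_iff_subsingleton] at h
      apply id_nonzero V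
      apply Action.Hom.ext
      ext x
      exact Subsingleton.elim (α := V) _ _
    have hnt2 : Nontrivial (Subrepresentation (V.ρ : Representation K G V)) := by
      refine ⟨⊥, ⊤, fun h => ?_⟩
      obtain ⟨x, hx⟩ := exists_ne (0 : V)
      have h1 : x ∈ (⊤ : Subrepresentation (V.ρ : Representation K G V)).toSubmodule := trivial
      rw [← h] at h1
      exact hx h1
    refine ⟨fun W => ?_⟩
    let Y : FDRep K G := FDRep.of W.toRepresentation
    let i : Y ⟶ V := ⟨InducedCategory.homMk (ModuleCat.ofHom W.toSubmodule.subtype), fun g => by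
      ext x
      rfl⟩
    have : Mono i := by
      have : Mono (F.map i) := by
        rw [Rep.mono_iff_injective]
        exact Subtype.val_injective
      exact F.mono_of_mono_map this
    by_cases hi : i = 0
    · left
      rw [eq_bot_iff]
      intro x hx
      have := congrArg (fun j : Y ⟶ V => (F.map j).hom (⟨x, hx⟩ : W.toSubmodule)) hi
      exact this
    · right
      have := isIso_of_mono_of_nonzero hi
      rw [eq_top_iff]
      intro x _
      let e := FDRep.isoToLinearEquiv (asIso i)
      have hx : e (e.symm x) = x := e.apply_symm_apply x
      rw [← hx]
      exact (e.symm x : W.toSubmodule).2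
  · intro hV
    constructor
    intro Y f hf
    constructor
    · intro hiso h0
      have hbot : (⊥ : Subrepresentation (V.ρ : Representation K G V)) = ⊤ := by
        rw [eq_top_iff]
        intro x _
        let e := FDRep.isoToLinearEquiv (asIso f)
        have hx : e (e.symm x) = x := e.apply_symm_apply x
        have h1 : e (e.symm x) = 0 :=
          congrArg (fun j : Y ⟶ V => (F.map j).hom (e.symm x)) h0
        rw [← hx, h1]
        exact Submodule.zero_mem _
      exact bot_ne_top hbot
    · intro h0
      have hinj : Function.Injective (F.map f).hom := by
        rw [← Rep.mono_iff_injective]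
        infer_instance
      let W : Subrepresentation (V.ρ : Representation K G V) :=
        ⟨LinearMap.range (F.map f).hom.toLinearMap, by
          rintro g _ ⟨y, rfl⟩
          refine ⟨Y.ρ g y, ?_⟩
          exact LinearMap.congr_fun ((F.map f).hom.isIntertwining' g) y⟩
      have hW : W = ⊤ := by
        rcases eq_bot_or_eq_top W with h | h
        · exfalso
          apply h0
          apply Action.Hom.ext
          ext y
          have : (F.map f).hom y ∈ W := ⟨y, rfl⟩
          rw [h] at this
          exact this
        · exact h
      have hsurj : Function.Surjective (F.map f).hom := by
        intro x
        have : x ∈ W := by rw [hW]; trivial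
        exact this
      have : IsIso (F.map f) := by
        have : IsIso ((forget (Rep K G)).map (F.map f)) := by
          rw [isIso_iff_bijective]
          exact ⟨hinj, hsurj⟩
        exact isIso_of_reflects_iso _ (forget (Rep K G))
      exact isIso_of_reflects_iso f F

lemma irrChar_iff_aux {K G : Type} [Field K] [Group G] (f : G → K) :
    (∃ V : FDRep K G, CategoryTheory.Simple V ∧ f = V.character) ↔ f ∈ IrrChar K G := by
  constructor
  · rintro ⟨V, hV, rfl⟩
    exact ⟨V, inferInstance, inferInstance, inferInstance, V.ρ, (simple_iff_aux V).mp hV, rfl⟩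
  · rintro ⟨V, _, _, _, ρ, hρ, rfl⟩
    exact ⟨FDRep.of ρ, (simple_iff_aux _).mpr hρ, rfl⟩

lemma orth_aux {K G : Type} [Field K] [CharZero K] [Group G] [Fintype G] {f h : G → K}
    (hf : f ∈ IrrChar K G) (hh : h ∈ IrrChar K G) (hne : f ≠ h) : ∑ g, f g * h g⁻¹ = 0 := by
  obtain ⟨V, _, _, _, ρ, hρ, rfl⟩ := hf
  obtain ⟨W, _, _, _, τ, hτ, rfl⟩ := hh
  have hc : (Nat.card G : K) ≠ 0 := by simp
  have := invertibleOfNonzero hc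
  have h1 := Representation.card_inv_mul_sum_char_mul_char_eq_finrank τ ρ
  have : IsEmpty (Representation.Equiv τ ρ) := ⟨fun e => hne (Representation.char_iso e).symm⟩
  rw [finrank_zero_of_subsingleton, Nat.cast_zero] at h1
  exact (mul_eq_zero.mp h1).resolve_left (inv_ne_zero hc)

lemma norm_aux {K G : Type} [Field K] [CharZero K] [Group G] [Fintype G] {f : G → K}
    (hf : f ∈ IrrChar K G) : ∑ g, f g * f g⁻¹ ≠ 0 := by
  obtain ⟨V, _, _, _, ρ, hρ, rfl⟩ := hf
  have hc : (Nat.card G : K) ≠ 0 := by simp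
  have := invertibleOfNonzero hc
  have h1 := Representation.card_inv_mul_sum_char_mul_char_eq_finrank ρ ρ
  have : Module.Finite K (ρ.IntertwiningMap ρ) :=
    Module.Finite.equiv (Representation.IntertwiningMap.equivAlgEnd (ρ := ρ)).toLinearEquiv.symm
  have hV : Nontrivial V := IsSimpleModule.nontrivial (MonoidAlgebra K G) ρ.asModule
  have : Nontrivial (ρ.IntertwiningMap ρ) := by
    refine ⟨.id ρ, 0, fun h => ?_⟩
    obtain ⟨x, hx⟩ := exists_ne (0 : V)
    exact hx (congrArg (fun j : ρ.IntertwiningMap ρ => j x) h)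
  intro h0
  rw [h0, mul_zero] at h1
  have := (finrank_pos (R := K) (M := ρ.IntertwiningMap ρ)).ne'
  exact this (by exact_mod_cast h1.symm)

lemma conj_aux {K G : Type} [Field K] [Group G] {f : G → K}
    (hf : f ∈ IrrChar K G) (g h : G) : f (h * g * h⁻¹) = f g := by
  obtain ⟨V, _, _, _, ρ, hρ, rfl⟩ := hf
  simp

lemma galois_aux {K G : Type} [Field K] [CharZero K] [Group G] [Fintype G] {f : G → K}
    (hf : f ∈ IrrChar K G) {z : K} (hz : IsPrimitiveRoot z (Fintype.card G)) (σ : K ≃+* K)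
    (r : ℕ) (hr : σ z = z ^ r) (g : G) : σ (f g) = f (g ^ r) := by
  obtain ⟨V, _, _, _, ρ, hρ, rfl⟩ := hf
  obtain ⟨m, hm⟩ := trace_aux Fintype.card_pos hz (ρ g) (by
    rw [← map_pow, pow_card_eq_one, map_one])
  have h1 := hm 1
  rw [pow_one] at h1
  have h2 := hm r
  unfold Representation.character
  rw [map_pow, h1, h2, map_sum]
  refine Finset.sum_congr rfl fun i _ => ?_
  rw [map_mul, map_natCast, pow_one, map_pow, hr, ← pow_mul, ← pow_mul, mul_comm r i]

/-- Type synonym carrying the Galois-twisted scalar action. -/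
def Tw {K : Type} [Field K] (_ : K ≃+* K) (V : Type) : Type := V

instance {K : Type} [Field K] (σ : K ≃+* K) (V : Type) [AddCommGroup V] : AddCommGroup (Tw σ V) :=
  inferInstanceAs (AddCommGroup V)

instance {K : Type} [Field K] (σ : K ≃+* K) (V : Type) [AddCommGroup V] [Module K V] :
    Module K (Tw σ V) :=
  Module.compHom V (σ.symm : K →+* K)

lemma twist_aux {K G : Type} [Field K] [Group G] {f : G → K}
    (hf : f ∈ IrrChar K G) (σ : K ≃+* K) : σ ∘ f ∈ IrrChar K G := by
  obtain ⟨V, _, _, _, ρ, hρ, rfl⟩ := hf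
  have hsm : ∀ (k : K) (v : V), (k • (show Tw σ V from v)) = (show Tw σ V from (σ.symm k • v)) :=
    fun _ _ => rfl
  let T : (V →ₗ[K] V) → (Tw σ V →ₗ[K] Tw σ V) := fun φ =>
    { toFun := fun v => φ v
      map_add' := fun v w => φ.map_add v w
      map_smul' := fun k v => φ.map_smul (σ.symm k) v }
  let τ : Representation K G (Tw σ V) :=
    { toFun := fun g => T (ρ g)
      map_one' := by
        rw [map_one]; rfl
      map_mul' := by
        intro g h
        rw [map_mul]; rfl }
  let b := Module.finBasis K V
  let b' : Basis (Fin (finrank K V)) K (Tw σ V) :=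
    Basis.ofEquivFun
      { toFun := fun v i => σ (b.equivFun v i)
        invFun := fun c => b.equivFun.symm (fun i => σ.symm (c i))
        left_inv := by
          intro v
          simp only [RingEquiv.symm_apply_apply]
          exact b.equivFun.symm_apply_apply v
        right_inv := by
          intro c
          funext i
          simp only [LinearEquiv.apply_symm_apply, RingEquiv.apply_symm_apply]
        map_add' := by
          intro v w
          funext i
          have := congrFun (b.equivFun.map_add v w) i
          exact (congrArg σ this).trans (map_add σ _ _)
        map_smul' := by
          intro k v
          funext i
          have := congrFun (b.equivFun.map_smul (σ.symm k) v) i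
          refine (congrArg σ this).trans ?_
          simp }
  have hfin : FiniteDimensional K (Tw σ V) := Module.Finite.of_basis b'
  refine ⟨Tw σ V, inferInstance, inferInstance, hfin, τ, ?_, ?_⟩
  · let e : Subrepresentation τ ≃o Subrepresentation ρ :=
      { toFun := fun W => ⟨⟨W.toSubmodule.toAddSubmonoid, by
          intro c x hx
          have := W.toSubmodule.smul_mem (σ c) hx
          have h2 := hsm (σ c) x
          rw [σ.symm_apply_apply] at h2
          exact (congrArg (fun y : Tw σ V => y ∈ W.toSubmodule) h2).mp this⟩, W.apply_mem_toSubmodule⟩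
        invFun := fun W => ⟨⟨W.toSubmodule.toAddSubmonoid, by
          intro c x hx
          exact W.toSubmodule.smul_mem (σ.symm c) hx⟩, W.apply_mem_toSubmodule⟩
        left_inv := fun W => rfl
        right_inv := fun W => rfl
        map_rel_iff' := Iff.rfl }
    exact (OrderIso.isSimpleOrder_iff e).mpr hρ
  · funext g
    change σ (LinearMap.trace K V (ρ g)) = LinearMap.trace K (Tw σ V) (τ g)
    rw [LinearMap.trace_eq_matrix_trace K b, LinearMap.trace_eq_matrix_trace K b']
    simp only [Matrix.trace, Matrix.diag, map_sum]
    refine Finset.sum_congr rfl fun i _ => ?_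
    rw [LinearMap.toMatrix_apply, LinearMap.toMatrix_apply]
    have hb : b' i = b i := by
      simp only [b', Basis.coe_ofEquivFun]
      change b.equivFun.symm _ = _
      rw [LinearEquiv.symm_apply_eq]
      funext j
      rw [Basis.equivFun_self]
      by_cases hj : j = i
      · subst hj; simp
      · simp [Pi.single_apply, hj, Ne.symm hj]
    rw [hb]
    rfl

lemma pow_aux {K G : Type} [Field K] [Group G] [Fintype G] {z : K}
    (hz : IsPrimitiveRoot z (Fintype.card G)) {a b : ℕ} (h : z ^ a = z ^ b) (g : G) :
    g ^ a = g ^ b := by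
  have hfo : IsOfFinOrder z :=
    isOfFinOrder_iff_pow_eq_one.mpr ⟨_, Fintype.card_pos, hz.pow_eq_one⟩
  rw [pow_eq_pow_iff_modEq]
  rw [hfo.pow_eq_pow_iff_modEq, ← hz.eq_orderOf] at h
  exact h.of_dvd (orderOf_dvd_card)

lemma exists_pow_aux {K G : Type} [Field K] [Algebra ℚ K] [Group G] [Fintype G] {z : K}
    (hz : IsPrimitiveRoot z (Fintype.card G)) (σ : K ≃ₐ[ℚ] K) : ∃ r : ℕ, σ z = z ^ r := by
  have : NeZero (Fintype.card G) := ⟨Fintype.card_ne_zero⟩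
  obtain ⟨r, _, hr⟩ := hz.eq_pow_of_pow_eq_one (ξ := σ z) (by
    rw [← map_pow, hz.pow_eq_one, map_one])
  exact ⟨r, hr.symm⟩

lemma mulpow_aux {K : Type} [Field K] [Algebra ℚ K] {z : K}
    (σ τ : K ≃ₐ[ℚ] K) {r s : ℕ} (hr : σ z = z ^ r) (hs : τ z = z ^ s) :
    (σ * τ) z = z ^ (r * s) := by
  rw [AlgEquiv.mul_apply, hs, map_pow, hr, pow_mul]

/-- Orbit of a function. -/
def orb1 {K G : Type} [Field K] [Algebra ℚ K] (Γ : Subgroup (K ≃ₐ[ℚ] K)) (f : G → K) :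
    Set (G → K) := {h | ∃ σ : K ≃ₐ[ℚ] K, σ ∈ Γ ∧ h = ⇑σ ∘ f}

/-- Orbit of a conjugacy class. -/
def orb2 {K G : Type} [Field K] [Algebra ℚ K] [Group G] (Γ : Subgroup (K ≃ₐ[ℚ] K)) (z : K)
    (g : G) : Set G :=
  {h | ∃ (σ : K ≃ₐ[ℚ] K) (r : ℕ), σ ∈ Γ ∧ σ z = z ^ r ∧ IsConj (g ^ r) h}

lemma orb1_self {K G : Type} [Field K] [Algebra ℚ K] (Γ : Subgroup (K ≃ₐ[ℚ] K)) (f : G → K) :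
    f ∈ orb1 Γ f := ⟨1, Γ.one_mem, rfl⟩

lemma orb2_self {K G : Type} [Field K] [Algebra ℚ K] [Group G] (Γ : Subgroup (K ≃ₐ[ℚ] K)) (z : K)
    (g : G) : g ∈ orb2 Γ z g := ⟨1, 1, Γ.one_mem, by simp, by rw [pow_one]⟩

lemma orb1_eq {K G : Type} [Field K] [Algebra ℚ K] (Γ : Subgroup (K ≃ₐ[ℚ] K)) (f : G → K)
    (σ : K ≃ₐ[ℚ] K) (hσ : σ ∈ Γ) : orb1 Γ (⇑σ ∘ f) = orb1 Γ f := by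
  ext h
  constructor
  · rintro ⟨τ, hτ, rfl⟩
    exact ⟨τ * σ, Γ.mul_mem hτ hσ, rfl⟩
  · rintro ⟨τ, hτ, rfl⟩
    refine ⟨τ * σ⁻¹, Γ.mul_mem hτ (Γ.inv_mem hσ), ?_⟩
    funext g
    change _ = τ (σ.symm (σ (f g)))
    simp

lemma orb2_eq {K G : Type} [Field K] [Algebra ℚ K] [Group G] [Fintype G]
    (Γ : Subgroup (K ≃ₐ[ℚ] K)) {z : K} (hz : IsPrimitiveRoot z (Fintype.card G)) (g h : G)
    (σ : K ≃ₐ[ℚ] K) (hσ : σ ∈ Γ) (r : ℕ) (hr : σ z = z ^ r) (hc : IsConj (g ^ r) h) :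
    orb2 Γ z g = orb2 Γ z h := by
  ext x
  constructor
  · rintro ⟨τ, s, hτ, hs, hx⟩
    obtain ⟨t, ht⟩ := exists_pow_aux hz (σ⁻¹ * τ)
    refine ⟨σ⁻¹ * τ, t, Γ.mul_mem (Γ.inv_mem hσ) hτ, ht, ?_⟩
    have h1 := mulpow_aux σ _ hr ht
    rw [mul_inv_cancel_left, hs] at h1
    have h2 : g ^ s = (g ^ r) ^ t := by rw [← pow_mul]; exact pow_aux hz h1 g
    rw [h2] at hx
    exact (hc.pow t).symm.trans hx
  · rintro ⟨τ, s, hτ, hs, hx⟩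
    refine ⟨σ * τ, r * s, Γ.mul_mem hσ hτ, mulpow_aux σ τ hr hs, ?_⟩
    rw [pow_mul]
    exact (hc.pow s).trans hx

lemma finite_aux {K G : Type} [Field K] [CharZero K] [Group G] [Fintype G] :
    Finite (IrrChar K G) := by
  have : LinearIndependent K (Subtype.val : IrrChar K G → (G → K)) := by
    rw [linearIndependent_iff']
    intro s c hc χ hχ
    have h1 : ∑ g, (∑ i ∈ s, c i • i.1) g * χ.1 g⁻¹ = 0 := by rw [hc]; simp
    simp only [Finset.sum_apply, Pi.smul_apply, smul_eq_mul, Finset.sum_mul] at h1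
    rw [Finset.sum_comm] at h1
    simp only [mul_assoc, ← Finset.mul_sum] at h1
    rw [Finset.sum_eq_single_of_mem χ hχ] at h1
    · exact (mul_eq_zero.mp h1).resolve_right (norm_aux χ.2)
    · intro ψ _ hne
      rw [orth_aux ψ.2 χ.2 (fun h => hne (Subtype.ext h)), mul_zero]
  exact this.finite

lemma main_aux {K G : Type} [Field K] [Algebra ℚ K] [Group G] [Fintype G]
    (Γ : Subgroup (K ≃ₐ[ℚ] K)) {z : K} (hz : IsPrimitiveRoot z (Fintype.card G)) :
    Nat.card {O : Set (G → K) | ∃ f, f ∈ IrrChar K G ∧ O = orb1 Γ f} =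
      Nat.card {O : Set G | ∃ g, O = orb2 Γ z g} := by
  classical
  have : CharZero K := algebraRat.charZero K
  have : Finite (IrrChar K G) := finite_aux
  have := Fintype.ofFinite (IrrChar K G)
  let X1 := {O : Set (G → K) | ∃ f, f ∈ IrrChar K G ∧ O = orb1 Γ f}
  let X2 := {O : Set G | ∃ g, O = orb2 Γ z g}
  let p1 : IrrChar K G → X1 := fun χ => ⟨orb1 Γ χ.1, χ.1, χ.2, rfl⟩
  let p2 : G → X2 := fun g => ⟨orb2 Γ z g, g, rfl⟩
  have hp1 : Function.Surjective p1 := by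
    rintro ⟨_, f, hf, rfl⟩
    exact ⟨⟨f, hf⟩, rfl⟩
  have hp2 : Function.Surjective p2 := by
    rintro ⟨_, g, rfl⟩
    exact ⟨g, rfl⟩
  have : Finite X1 := Finite.of_surjective p1 hp1
  have : Finite X2 := Finite.of_surjective p2 hp2
  have := Fintype.ofFinite X1
  have := Fintype.ofFinite X2
  obtain ⟨s1, hs1⟩ := hp1.hasRightInverse
  obtain ⟨s2, hs2⟩ := hp2.hasRightInverse
  have hp1' : ∀ χ ψ, p1 χ = p1 ψ → ∃ σ ∈ Γ, ψ.1 = ⇑σ ∘ χ.1 := by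
    intro χ ψ h
    have h1 : ψ.1 ∈ orb1 Γ χ.1 := by
      rw [show orb1 Γ χ.1 = orb1 Γ ψ.1 from congrArg Subtype.val h]
      exact orb1_self Γ _
    exact h1
  have hp2' : ∀ g h, p2 g = p2 h → ∃ σ r, σ ∈ Γ ∧ σ z = z ^ r ∧ IsConj (g ^ r) h := by
    intro g h hh
    have h1 : h ∈ orb2 Γ z g := by
      rw [show orb2 Γ z g = orb2 Γ z h from congrArg Subtype.val hh]
      exact orb2_self Γ _ _
    exact h1
  have hgal : ∀ (χ : IrrChar K G) (σ : K ≃ₐ[ℚ] K) (r : ℕ), σ z = z ^ r → ∀ g,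
      σ (χ.1 g) = χ.1 (g ^ r) := fun χ σ r hr g => galois_aux χ.2 hz σ.toRingEquiv r hr g
  let act : (K ≃ₐ[ℚ] K) → IrrChar K G ≃ IrrChar K G := fun σ =>
    { toFun := fun χ => ⟨⇑σ ∘ χ.1, twist_aux χ.2 σ.toRingEquiv⟩
      invFun := fun χ => ⟨⇑σ.symm ∘ χ.1, twist_aux χ.2 σ.symm.toRingEquiv⟩
      left_inv := fun χ => by ext g; simp
      right_inv := fun χ => by ext g; simp }
  have hact : ∀ σ ∈ Γ, ∀ χ, p1 (act σ χ) = p1 χ := fun σ hσ χ =>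
    Subtype.ext (orb1_eq Γ χ.1 σ hσ)
  have hconj : ∀ χ : IrrChar K G, ∀ g h, IsConj g h → χ.1 g = χ.1 h := by
    intro χ g h hgh
    obtain ⟨c, rfl⟩ := isConj_iff.mp hgh
    exact (conj_aux χ.2 g c).symm
  let F : (X1 → K) →ₗ[K] (G → K) :=
    { toFun := fun c => ∑ χ, c (p1 χ) • χ.1
      map_add' := by intro c d; simp [add_smul, Finset.sum_add_distrib]
      map_smul' := by intro k c; simp [mul_smul, Finset.smul_sum] }
  have hF : ∀ c g, F c g = ∑ χ, c (p1 χ) * χ.1 g := by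
    intro c g
    simp [F, Finset.sum_apply]
  have hFinv : ∀ c g h, p2 g = p2 h → F c g = F c h := by
    intro c g h hgh
    obtain ⟨σ, r, hσ, hr, hc⟩ := hp2' g h hgh
    rw [hF, hF, ← (act σ).sum_comp]
    refine Finset.sum_congr rfl fun χ _ => ?_
    rw [hact σ hσ, ← hconj χ _ _ hc, ← hgal χ σ r hr]
    rfl
  let Ψ : (X1 → K) →ₗ[K] (X2 → K) := (LinearMap.funLeft K K s2) ∘ₗ F
  have hΨ : ∀ c g, Ψ c (p2 g) = F c g := fun c g => hFinv c _ _ (hs2 (p2 g))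
  have hinj : Function.Injective Ψ := by
    rw [← LinearMap.ker_eq_bot, LinearMap.ker_eq_bot']
    intro c hc
    funext x
    obtain ⟨χ, rfl⟩ := hp1 x
    have h0 : ∀ g, F c g = 0 := fun g => by rw [← hΨ, hc]; rfl
    have h1 : ∑ g, F c g * χ.1 g⁻¹ = 0 := by simp [h0]
    simp only [hF, Finset.sum_mul] at h1
    rw [Finset.sum_comm] at h1
    simp only [mul_assoc, ← Finset.mul_sum] at h1
    rw [Finset.sum_eq_single_of_mem χ (Finset.mem_univ _)] at h1
    · exact (mul_eq_zero.mp h1).resolve_right (norm_aux χ.2)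
    · intro ψ _ hne
      rw [orth_aux ψ.2 χ.2 (fun h => hne (Subtype.ext h)), mul_zero]
  have hsurj : Function.Surjective Ψ := by
    intro d
    let f : G → K := fun g => d (p2 g)
    have hfr : ∀ σ ∈ Γ, ∀ r, σ z = z ^ r → ∀ g h, IsConj (g ^ r) h → f g = f h := by
      intro σ hσ r hr g h hc
      exact congrArg d (Subtype.ext (orb2_eq Γ hz g h σ hσ r hr hc))
    let a : IrrChar K G → K := fun χ => (∑ g, f g * χ.1 g⁻¹) / ∑ g, χ.1 g * χ.1 g⁻¹
    have ha : ∀ σ ∈ Γ, ∀ χ, a (act σ χ) = a χ := by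
      intro σ hσ χ
      obtain ⟨r, hr⟩ := exists_pow_aux hz σ
      obtain ⟨t, ht⟩ := exists_pow_aux hz σ⁻¹
      have hrt := mulpow_aux _ _ hr ht
      rw [mul_inv_cancel] at hrt
      have hrt' : ∀ g : G, g ^ (r * t) = g := fun g => by
        conv_rhs => rw [← pow_one g]
        exact pow_aux hz (by rw [← hrt, pow_one]; rfl) g
      let e : G ≃ G :=
        { toFun := fun g => g ^ r
          invFun := fun g => g ^ t
          left_inv := fun g => by simp only [← pow_mul, hrt']
          right_inv := fun g => by simp only [← pow_mul, mul_comm t r, hrt'] }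
      have hv : ∀ g, (act σ χ).1 g = χ.1 (g ^ r) := fun g => hgal χ σ r hr g
      simp only [a]
      congr 1
      · rw [← e.sum_comp (fun g => f g * χ.1 g⁻¹)]
        refine Finset.sum_congr rfl fun g _ => ?_
        rw [hv, hfr σ hσ r hr g (g ^ r) (IsConj.refl _), inv_pow]
        rfl
      · rw [← e.sum_comp (fun g => χ.1 g * χ.1 g⁻¹)]
        refine Finset.sum_congr rfl fun g _ => ?_
        rw [hv, hv, inv_pow]
        rfl
    refine ⟨fun x => a (s1 x), ?_⟩
    have has : ∀ χ, a (s1 (p1 χ)) = a χ := by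
      intro χ
      obtain ⟨σ, hσ, h⟩ := hp1' _ _ (hs1 (p1 χ))
      have : χ = act σ (s1 (p1 χ)) := Subtype.ext h
      conv_rhs => rw [this]
      rw [ha σ hσ]
    have key : (fun g => f g⁻¹ - F (fun x => a (s1 x)) g⁻¹) = 0 := by
      apply eq_zero_aux hz
      · intro g h
        have h1 : ∀ g h, IsConj g h → f g = f h := fun g h hgh =>
          hfr 1 Γ.one_mem 1 (by simp) g h (by simpa using hgh)
        have hi : IsConj g⁻¹ (h * g * h⁻¹)⁻¹ := isConj_iff.mpr ⟨h, by group⟩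
        rw [h1 _ _ hi, hF, hF]
        congr 1
        exact Finset.sum_congr rfl fun χ _ => by rw [hconj χ _ _ hi]
      · intro V _ _ _ ρ hρ
        let χ : IrrChar K G := ⟨ρ.character, V, inferInstance, inferInstance, inferInstance, ρ, hρ, rfl⟩
        change ∑ g, (f g⁻¹ - F (fun x => a (s1 x)) g⁻¹) * χ.1 g = 0
        rw [← Equiv.sum_comp (Equiv.inv G)]
        simp only [Equiv.inv_apply, inv_inv, sub_mul, Finset.sum_sub_distrib, hF, Finset.sum_mul, has]
        rw [Finset.sum_comm (s := Finset.univ) (t := (Finset.univ : Finset (IrrChar K G)))]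
        simp only [mul_assoc, ← Finset.mul_sum]
        rw [Finset.sum_eq_single_of_mem χ (Finset.mem_univ _)]
        · simp only [a]
          rw [div_mul_cancel₀ _ (norm_aux χ.2), sub_self]
        · intro ψ _ hne
          rw [orth_aux ψ.2 χ.2 (fun h => hne (Subtype.ext h)), mul_zero]
    funext x
    obtain ⟨g, rfl⟩ := hp2 x
    rw [hΨ]
    have := congrFun key g⁻¹
    simp only [inv_inv, Pi.zero_apply] at this
    exact (sub_eq_zero.mp this).symm
  have hfin := (LinearEquiv.ofBijective Ψ ⟨hinj, hsurj⟩).finrank_eq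
  rw [finrank_fintype_fun_eq_card, finrank_fintype_fun_eq_card] at hfin
  rw [Nat.card_eq_fintype_card, Nat.card_eq_fintype_card]
  exact hfin

end Helpers


theorem stmt14 (G : Type) [Group G] [Fintype G] (n d : ℕ+)
    (hcard : Fintype.card G = (n : ℕ)) (hd : (d : ℕ) ∣ (n : ℕ))
    (ζ : CyclotomicField n ℚ) (hζ : IsPrimitiveRoot ζ (n : ℕ)) :
    let zd := ζ ^ ((n : ℕ) / (d : ℕ))
    Nat.card {O : Set (G → CyclotomicField n ℚ) |
        ∃ f : G → CyclotomicField n ℚ,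
          (∃ V : FDRep (CyclotomicField n ℚ) G,
            CategoryTheory.Simple V ∧ f = V.character) ∧
          O = {h | ∃ σ : CyclotomicField n ℚ ≃ₐ[ℚ] CyclotomicField n ℚ,
            σ zd = zd ∧ h = ⇑σ ∘ f}} =
      Nat.card {O : Set G | ∃ g : G,
        O = {h | ∃ (σ : CyclotomicField n ℚ ≃ₐ[ℚ] CyclotomicField n ℚ) (r : ℕ),
          σ zd = zd ∧ σ ζ = ζ ^ r ∧ IsConj (g ^ r) h}} := by
  intro zd
  let Γ : Subgroup (CyclotomicField n ℚ ≃ₐ[ℚ] CyclotomicField n ℚ) :=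
    { carrier := {σ | σ zd = zd}
      one_mem' := rfl
      mul_mem' := by
        intro σ τ hσ hτ
        change σ (τ zd) = zd
        rw [show τ zd = zd from hτ]
        exact hσ
      inv_mem' := by
        intro σ hσ
        change σ.symm zd = zd
        rw [AlgEquiv.symm_apply_eq]
        exact (show σ zd = zd from hσ).symm }
  have hζ' : IsPrimitiveRoot ζ (Fintype.card G) := hcard.symm ▸ hζ
  have h := main_aux (G := G) Γ hζ'
  simp only [← irrChar_iff_aux] at h
  exact h
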